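/- Let (C, Ω, 𝔓) be a measurable spined category. Then both the triangulation functor Δ and the chordal triangulation functor Δ^ch are S-functors over C: each is monotone along morphisms, satisfies Δ[Ω_n] = n (resp. Δ^ch[Ω_n] = n) for all n ∈ ℕ, and satisfies Δ[𝔓(a,b)] = max(Δ[A], Δ[B]) (resp. Δ^ch[𝔓(a,b)] = max(Δ^ch[A], Δ^ch[B])) for every span A ←a— Ω_n —b→ B in C. -/

import Mathlib

open CategoryTheory

universe u v

/-- The data of a spine and proxy pushout operation on a category. -/
structure SpineData (C : Type u) [Category.{v} C] where
  /-- the spine, a functor from the discrete category ℕ -/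
  Ω : ℕ → C
  /-- proxy pushout object of a span out of a spine object -/
  P : ∀ {n : ℕ} {G H : C}, (Ω n ⟶ G) → (Ω n ⟶ H) → C
  /-- left structure morphism of the proxy pushout cocone -/
  inl : ∀ {n : ℕ} {G H : C} (g : Ω n ⟶ G) (h : Ω n ⟶ H), G ⟶ P g h
  /-- right structure morphism of the proxy pushout cocone -/
  inr : ∀ {n : ℕ} {G H : C} (g : Ω n ⟶ G) (h : Ω n ⟶ H), H ⟶ P g h

variable {C : Type u} [Category.{v} C]

/-- (SC1): every object admits a morphism to some spine object. -/
def SpineData.SC1 (D : SpineData C) : Prop :=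
  ∀ X : C, ∃ n : ℕ, Nonempty (X ⟶ D.Ω n)

/-- (SC2): unique compatibility morphisms between proxy pushouts of extended spans. -/
def SpineData.SC2 (D : SpineData C) : Prop :=
  ∀ {n : ℕ} {G H G' H' : C} (g : D.Ω n ⟶ G) (h : D.Ω n ⟶ H) (g' : G ⟶ G') (h' : H ⟶ H'),
    ∃! m : D.P g h ⟶ D.P (g ≫ g') (h ≫ h'),
      D.inl g h ≫ m = g' ≫ D.inl (g ≫ g') (h ≫ h') ∧
      D.inr g h ≫ m = h' ≫ D.inr (g ≫ g') (h ≫ h')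

/-- A spined category is a category equipped with spine data satisfying SC1 and SC2. -/
def SpineData.IsSpined (D : SpineData C) : Prop := D.SC1 ∧ D.SC2

/-- An S-functor over a spined category `(C, Ω, 𝔓)`: a spinal functor to the spined
category `Nat` (the poset `(ℕ, ≤)` with spine `n ↦ n` and proxy pushouts given by maxima).
Equivalently: a monotone map preserving the spine and proxy pushouts. -/
structure SFunctor (D : SpineData C) where
  val : C → ℕ
  mono : ∀ {X Y : C}, (X ⟶ Y) → val X ≤ val Y
  spine : ∀ n : ℕ, val (D.Ω n) = n
  pp : ∀ {n : ℕ} {G H : C} (g : D.Ω n ⟶ G) (h : D.Ω n ⟶ H),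
    val (D.P g h) = max (val G) (val H)

/-- An object is pseudo-chordal if all S-functors agree on it. -/
def PseudoChordal (D : SpineData C) (X : C) : Prop :=
  ∀ F G : SFunctor D, F.val X = G.val X

/-- The chordal objects: the smallest collection of objects containing the spine and
closed under proxy pushouts. -/
inductive Chordal (D : SpineData C) : C → Prop
  | spine (n : ℕ) : Chordal D (D.Ω n)
  | push {n : ℕ} {A B : C} (a : D.Ω n ⟶ A) (b : D.Ω n ⟶ B) :
      Chordal D A → Chordal D B → Chordal D (D.P a b)

/-- The set of widths of pseudo-chordal completions of `X`: `k` is such a width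
iff there is a morphism `X ⟶ H` with `H` pseudo-chordal and every S-functor takes
the value `k` on `H`. -/
def pcWidths (D : SpineData C) (X : C) : Set ℕ :=
  {k | ∃ H : C, Nonempty (X ⟶ H) ∧ PseudoChordal D H ∧ ∀ F : SFunctor D, F.val H = k}

/-- The set of widths of chordal completions of `X`. -/
def chWidths (D : SpineData C) (X : C) : Set ℕ :=
  {k | ∃ H : C, Nonempty (X ⟶ H) ∧ Chordal D H ∧ ∀ F : SFunctor D, F.val H = k}

/-- The triangulation number: minimum width of a pseudo-chordal completion. -/
noncomputable def tri (D : SpineData C) (X : C) : ℕ := sInf (pcWidths D X)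

/-- The chordal triangulation number: minimum width of a chordal completion. -/
noncomputable def triCh (D : SpineData C) (X : C) : ℕ := sInf (chWidths D X)

/-- The order of an object: least `n` admitting a morphism `X ⟶ Ω n`. -/
noncomputable def ordOf (D : SpineData C) (X : C) : ℕ := sInf {n : ℕ | Nonempty (X ⟶ D.Ω n)}

/-!
Every S-functor is bounded by the width of any completion, which pins the triangulation number of
`Ω n` at `n`. Precomposing a completion with a morphism gives monotonicity, hence the lower bound on
a proxy pushout. For the upper bound, optimal completions `A ⟶ H` and `B ⟶ K` are glued along the
comparison morphism `P a b ⟶ P (a ≫ g) (b ≫ h)`. Nothing about the class of target objects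
matters beyond its containing the spine and being closed under proxy pushouts.
-/

namespace SpineData

/-- The existence half of (SC2), without commutation with the cocones: extending the legs of a
span induces some morphism between proxy pushouts. -/
def HasComparison (D : SpineData C) : Prop :=
  ∀ ⦃n : ℕ⦄ ⦃G H G' H' : C⦄ (g : D.Ω n ⟶ G) (h : D.Ω n ⟶ H) (g' : G ⟶ G') (h' : H ⟶ H'),
    Nonempty (D.P g h ⟶ D.P (g ≫ g') (h ≫ h'))

theorem SC2.hasComparison {D : SpineData C} (hD : D.SC2) : D.HasComparison :=
  fun _ _ _ _ _ g h g' h' => ⟨(hD g h g' h').choose⟩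

/-- The widths of completions `X ⟶ H` with `H` in the class `Q`; the common setting of `pcWidths`
and `chWidths`. Objects of `Q` need not be pseudo-chordal: a completion on whose target the
S-functors disagree has no width and is ignored. -/
def completionWidths (D : SpineData C) (Q : ObjectProperty C) (X : C) : Set ℕ :=
  {k | ∃ H : C, Nonempty (X ⟶ H) ∧ Q H ∧ ∀ F : SFunctor D, F.val H = k}

/-- The minimum width of a completion of `X` in the class `Q`; the common setting of `tri` and
`triCh`. It is the junk value `0` if there is no such completion. -/
noncomputable def minWidth (D : SpineData C) (Q : ObjectProperty C) (X : C) : ℕ :=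
  sInf (D.completionWidths Q X)

variable {D : SpineData C} {Q : ObjectProperty C}

theorem mem_completionWidths_spine {X : C} {n : ℕ} (hn : Q (D.Ω n)) (f : X ⟶ D.Ω n) :
    n ∈ D.completionWidths Q X :=
  ⟨D.Ω n, ⟨f⟩, hn, fun F => F.spine n⟩

theorem SC1.completionWidths_nonempty (hD : D.SC1) (hspine : ∀ n, Q (D.Ω n)) (X : C) :
    (D.completionWidths Q X).Nonempty :=
  let ⟨n, ⟨f⟩⟩ := hD X
  ⟨n, mem_completionWidths_spine (hspine n) f⟩

theorem completionWidths_subset_of_hom {X Y : C} (f : X ⟶ Y) :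
    D.completionWidths Q Y ⊆ D.completionWidths Q X :=
  fun _ ⟨H, ⟨g⟩, hH, hwidth⟩ => ⟨H, ⟨f ≫ g⟩, hH, hwidth⟩

theorem max_mem_completionWidths_P (hcomp : D.HasComparison)
    (hpush : ∀ {n : ℕ} {A B : C} (a : D.Ω n ⟶ A) (b : D.Ω n ⟶ B), Q A → Q B → Q (D.P a b))
    {n k l : ℕ} {A B : C} (a : D.Ω n ⟶ A) (b : D.Ω n ⟶ B)
    (hk : k ∈ D.completionWidths Q A) (hl : l ∈ D.completionWidths Q B) :
    max k l ∈ D.completionWidths Q (D.P a b) := by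
  obtain ⟨H, ⟨g⟩, hH, hHk⟩ := hk
  obtain ⟨K, ⟨h⟩, hK, hKl⟩ := hl
  exact ⟨D.P (a ≫ g) (b ≫ h), hcomp a b g h, hpush _ _ hH hK,
    fun F => by rw [F.pp, hHk, hKl]⟩

theorem minWidth_mem {X : C} (hX : (D.completionWidths Q X).Nonempty) :
    D.minWidth Q X ∈ D.completionWidths Q X :=
  Nat.sInf_mem hX

theorem minWidth_le {X : C} {k : ℕ} (hk : k ∈ D.completionWidths Q X) : D.minWidth Q X ≤ k :=
  Nat.sInf_le hk

theorem minWidth_le_minWidth {X Y : C} (f : X ⟶ Y) (hY : (D.completionWidths Q Y).Nonempty) :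
    D.minWidth Q X ≤ D.minWidth Q Y :=
  minWidth_le (completionWidths_subset_of_hom f (minWidth_mem hY))

theorem val_le_minWidth (F : SFunctor D) {X : C} (hX : (D.completionWidths Q X).Nonempty) :
    F.val X ≤ D.minWidth Q X := by
  obtain ⟨H, ⟨g⟩, -, hwidth⟩ := minWidth_mem hX
  exact (F.mono g).trans_eq (hwidth F)

theorem minWidth_spine (hmeas : Nonempty (SFunctor D)) {n : ℕ} (hn : Q (D.Ω n)) :
    D.minWidth Q (D.Ω n) = n := by
  obtain ⟨F⟩ := hmeas
  have hmem : n ∈ D.completionWidths Q (D.Ω n) := mem_completionWidths_spine hn (𝟙 _)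
  exact (minWidth_le hmem).antisymm ((F.spine n).symm.trans_le (val_le_minWidth F ⟨n, hmem⟩))

theorem minWidth_P (hcomp : D.HasComparison)
    (hpush : ∀ {n : ℕ} {A B : C} (a : D.Ω n ⟶ A) (b : D.Ω n ⟶ B), Q A → Q B → Q (D.P a b))
    {n : ℕ} {A B : C} (a : D.Ω n ⟶ A) (b : D.Ω n ⟶ B)
    (hA : (D.completionWidths Q A).Nonempty) (hB : (D.completionWidths Q B).Nonempty) :
    D.minWidth Q (D.P a b) = max (D.minWidth Q A) (D.minWidth Q B) := by
  have hmem := max_mem_completionWidths_P hcomp hpush a b (minWidth_mem hA) (minWidth_mem hB)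
  exact (minWidth_le hmem).antisymm
    (max_le (minWidth_le_minWidth (D.inl a b) ⟨_, hmem⟩)
      (minWidth_le_minWidth (D.inr a b) ⟨_, hmem⟩))

end SpineData

theorem PseudoChordal.spine (D : SpineData C) (n : ℕ) : PseudoChordal D (D.Ω n) :=
  fun F G => (F.spine n).trans (G.spine n).symm

theorem PseudoChordal.push {D : SpineData C} {n : ℕ} {A B : C} (a : D.Ω n ⟶ A) (b : D.Ω n ⟶ B)
    (hA : PseudoChordal D A) (hB : PseudoChordal D B) : PseudoChordal D (D.P a b) :=
  fun F G => by rw [F.pp, G.pp, hA F G, hB F G]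

theorem triangulation_is_SFunctor_general (D : SpineData C) (hSC1 : D.SC1)
    (hcomp : D.HasComparison) (hmeas : Nonempty (SFunctor D)) (Q : ObjectProperty C)
    (hspine : ∀ n, Q (D.Ω n))
    (hpush : ∀ {n : ℕ} {A B : C} (a : D.Ω n ⟶ A) (b : D.Ω n ⟶ B), Q A → Q B → Q (D.P a b)) :
    (∀ {X Y : C}, (X ⟶ Y) → D.minWidth Q X ≤ D.minWidth Q Y) ∧
      (∀ n : ℕ, D.minWidth Q (D.Ω n) = n) ∧
      (∀ {n : ℕ} {A B : C} (a : D.Ω n ⟶ A) (b : D.Ω n ⟶ B),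
        D.minWidth Q (D.P a b) = max (D.minWidth Q A) (D.minWidth Q B)) :=
  have hne := hSC1.completionWidths_nonempty hspine
  ⟨fun f => SpineData.minWidth_le_minWidth f (hne _),
    fun n => SpineData.minWidth_spine hmeas (hspine n),
    fun a b => SpineData.minWidth_P hcomp hpush a b (hne _) (hne _)⟩

/-- in a measurable spined category, both the triangulation functor Δ and
the chordal triangulation functor Δ^ch are S-functors: monotone along morphisms, taking
the value `n` on `Ω n`, and taking proxy pushouts to maxima. -/
theorem triangulation_is_SFunctor
    {C : Type u} [Category.{v} C] (D : SpineData C) (hD : D.IsSpined)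
    (hmeas : Nonempty (SFunctor D)) :
    ((∀ {X Y : C}, (X ⟶ Y) → tri D X ≤ tri D Y) ∧
      (∀ n : ℕ, tri D (D.Ω n) = n) ∧
      (∀ {n : ℕ} {A B : C} (a : D.Ω n ⟶ A) (b : D.Ω n ⟶ B),
        tri D (D.P a b) = max (tri D A) (tri D B))) ∧
    ((∀ {X Y : C}, (X ⟶ Y) → triCh D X ≤ triCh D Y) ∧
      (∀ n : ℕ, triCh D (D.Ω n) = n) ∧
      (∀ {n : ℕ} {A B : C} (a : D.Ω n ⟶ A) (b : D.Ω n ⟶ B),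
        triCh D (D.P a b) = max (triCh D A) (triCh D B))) :=
  have hcomp : D.HasComparison := SpineData.SC2.hasComparison hD.2
  ⟨triangulation_is_SFunctor_general D hD.1 hcomp hmeas (PseudoChordal D)
      (PseudoChordal.spine D) PseudoChordal.push,
    triangulation_is_SFunctor_general D hD.1 hcomp hmeas (Chordal D) Chordal.spine Chordal.push⟩
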